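/- There exist constants c₁, c₂ > 0, depending only on d and α, such that c₁ (1 + |ξ|^α) ≤ 1 + ψ(ξ) ≤ c₂ (1 + |ξ|^α) for every ξ ∈ ℝ^d. -/

import Mathlib

open MeasureTheory

/-- The constant `A(d, -α) = α 2^{α-1} π^{-d/2} Γ((d+α)/2) / Γ(1-α/2)`. -/
noncomputable def stableA (d : ℕ) (α : ℝ) : ℝ :=
  α * (2 : ℝ) ^ (α - 1) * Real.pi ^ (-(d : ℝ) / 2) * Real.Gamma (((d : ℝ) + α) / 2) /
    Real.Gamma (1 - α / 2)

/-- The truncated stable characteristic exponent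
`ψ(ξ) = A(d,-α) ∫_{|y|<1} (1 - cos(ξ·y)) |y|^{-d-α} dy`. -/
noncomputable def truncPsi (d : ℕ) (α : ℝ) (ξ : EuclideanSpace ℝ (Fin d)) : ℝ :=
  stableA d α *
    ∫ y in Metric.ball (0 : EuclideanSpace ℝ (Fin d)) 1,
      (1 - Real.cos (inner ℝ ξ y)) * ‖y‖ ^ (-(d : ℝ) - α)



lemma stableA_pos (d : ℕ) (α : ℝ) (hα : 0 < α) (hα2 : α < 2) : 0 < stableA d α := by
  unfold stableA
  have h1 : 0 < Real.Gamma (((d : ℝ) + α) / 2) := Real.Gamma_pos_of_pos (by positivity)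
  have h2 : 0 < Real.Gamma (1 - α / 2) := Real.Gamma_pos_of_pos (by linarith)
  have := Real.pi_pos
  positivity

noncomputable def auxG (d : ℕ) (α : ℝ) (t : ℝ) : ℝ := min 2 (t ^ 2 / 2) * t ^ (-(d : ℝ) - α)

lemma auxG_meas (d : ℕ) (α : ℝ) : Measurable (auxG d α) := by
  unfold auxG
  fun_prop

lemma auxG_integrable (d : ℕ) (hd : 2 ≤ d) (α : ℝ) (hα : 0 < α) (hα2 : α < 2) :
    Integrable (fun y : EuclideanSpace ℝ (Fin d) => auxG d α ‖y‖) := by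
  have : Nonempty (Fin d) := ⟨⟨0, by omega⟩⟩
  have : Nontrivial (EuclideanSpace ℝ (Fin d)) := inferInstance
  rw [integrable_fun_norm_addHaar volume (f := auxG d α)]
  have hm : Measurable (fun y : ℝ => y ^ (Module.finrank ℝ (EuclideanSpace ℝ (Fin d)) - 1) • auxG d α y) := by
    have := auxG_meas d α
    fun_prop
  have key : ∀ t : ℝ, 0 < t → t ^ (Module.finrank ℝ (EuclideanSpace ℝ (Fin d)) - 1) • auxG d α t
      = min 2 (t ^ 2 / 2) * t ^ (-1 - α) := by
    intro t ht
    rw [finrank_euclideanSpace_fin, smul_eq_mul, auxG, ← Real.rpow_natCast t (d-1), mul_left_comm,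
      ← Real.rpow_add ht]
    congr 2
    rw [Nat.cast_sub (by omega)]
    push_cast
    ring
  rw [← Set.Ioc_union_Ioi_eq_Ioi (zero_le_one (α := ℝ))]
  refine IntegrableOn.union ?_ ?_
  · have h := (intervalIntegral.intervalIntegrable_rpow' (a := 0) (b := 1) (r := 1 - α) (by linarith))
    rw [intervalIntegrable_iff_integrableOn_Ioc_of_le zero_le_one] at h
    refine Integrable.mono' h hm.aestronglyMeasurable ?_
    refine (ae_restrict_iff' measurableSet_Ioc).2 (Filter.Eventually.of_forall ?_)
    intro t ht
    have ht0 := ht.1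
    rw [key t ht0, Real.norm_of_nonneg (by positivity)]
    have : t ^ (1 - α) = t ^ 2 * t ^ (-1 - α) := by
      rw [← Real.rpow_natCast t 2, ← Real.rpow_add ht0]; congr 1; push_cast; ring
    rw [this]
    gcongr
    exact (min_le_right _ _).trans (by nlinarith [sq_nonneg t])
  · have h := (integrableOn_Ioi_rpow_of_lt (a := -1 - α) (by linarith) (c := 1) one_pos).const_mul 2
    refine Integrable.mono' h hm.aestronglyMeasurable ?_
    refine (ae_restrict_iff' measurableSet_Ioi).2 (Filter.Eventually.of_forall ?_)
    intro t ht
    have ht0 : 0 < t := lt_trans one_pos ht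
    rw [key t ht0, Real.norm_of_nonneg (by positivity)]
    gcongr
    exact min_le_left _ _

lemma K_nonneg (d : ℕ) (α : ℝ) (ξ y : EuclideanSpace ℝ (Fin d)) :
    0 ≤ (1 - Real.cos (inner ℝ ξ y)) * ‖y‖ ^ (-(d : ℝ) - α) := by
  have := Real.cos_le_one (inner ℝ ξ y)
  have : 0 ≤ 1 - Real.cos (inner ℝ ξ y) := by linarith
  positivity

lemma K_le (d : ℕ) (α : ℝ) (ξ y : EuclideanSpace ℝ (Fin d)) (hξ : 0 < ‖ξ‖) :
    (1 - Real.cos (inner ℝ ξ y)) * ‖y‖ ^ (-(d : ℝ) - α) ≤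
      ‖ξ‖ ^ ((d : ℝ) + α) * auxG d α ‖(‖ξ‖ • y)‖ := by
  have e : ‖ξ‖ ^ ((d : ℝ) + α) * auxG d α ‖(‖ξ‖ • y)‖ =
      min 2 ((‖ξ‖ * ‖y‖) ^ 2 / 2) * ‖y‖ ^ (-(d : ℝ) - α) := by
    rw [norm_smul, norm_norm, auxG, Real.mul_rpow (norm_nonneg _) (norm_nonneg _)]
    have : ‖ξ‖ ^ ((d : ℝ) + α) * ‖ξ‖ ^ (-(d : ℝ) - α) = 1 := by
      rw [← Real.rpow_add hξ]
      ring_nf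
      simp
    linear_combination (min 2 ((‖ξ‖ * ‖y‖) ^ 2 / 2) * ‖y‖ ^ (-(d : ℝ) - α)) * this
  rw [e]
  gcongr
  apply le_min
  · linarith [Real.neg_one_le_cos (inner ℝ ξ y)]
  · have h1 := Real.one_sub_sq_div_two_le_cos (x := inner ℝ ξ y)
    have h2 := abs_real_inner_le_norm ξ y
    have h3 := sq_le_sq' (by linarith [neg_abs_le (inner ℝ ξ y)]) ((le_abs_self _).trans h2)
    linarith

lemma dom_integrable (d : ℕ) (hd : 2 ≤ d) (α : ℝ) (hα : 0 < α) (hα2 : α < 2)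
    (ξ : EuclideanSpace ℝ (Fin d)) (hξ : 0 < ‖ξ‖) :
    Integrable (fun y : EuclideanSpace ℝ (Fin d) => ‖ξ‖ ^ ((d : ℝ) + α) * auxG d α ‖(‖ξ‖ • y)‖) :=
  ((auxG_integrable d hd α hα hα2).comp_smul hξ.ne').const_mul _

lemma K_integrable (d : ℕ) (hd : 2 ≤ d) (α : ℝ) (hα : 0 < α) (hα2 : α < 2)
    (ξ : EuclideanSpace ℝ (Fin d)) (hξ : 0 < ‖ξ‖) :
    Integrable (fun y : EuclideanSpace ℝ (Fin d) =>
      (1 - Real.cos (inner ℝ ξ y)) * ‖y‖ ^ (-(d : ℝ) - α)) := by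
  refine Integrable.mono' (dom_integrable d hd α hα hα2 ξ hξ) ?_ ?_
  · apply Measurable.aestronglyMeasurable
    fun_prop
  · refine Filter.Eventually.of_forall fun y => ?_
    rw [Real.norm_of_nonneg (K_nonneg d α ξ y)]
    exact K_le d α ξ y hξ

lemma K_upper (d : ℕ) (hd : 2 ≤ d) (α : ℝ) (hα : 0 < α) (hα2 : α < 2)
    (ξ : EuclideanSpace ℝ (Fin d)) (hξ : 0 < ‖ξ‖) :
    ∫ y in Metric.ball (0 : EuclideanSpace ℝ (Fin d)) 1,
      (1 - Real.cos (inner ℝ ξ y)) * ‖y‖ ^ (-(d : ℝ) - α) ≤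
    (∫ y : EuclideanSpace ℝ (Fin d), auxG d α ‖y‖) * ‖ξ‖ ^ α := by
  calc _ ≤ ∫ y : EuclideanSpace ℝ (Fin d), (1 - Real.cos (inner ℝ ξ y)) * ‖y‖ ^ (-(d : ℝ) - α) :=
        setIntegral_le_integral (K_integrable d hd α hα hα2 ξ hξ)
          (Filter.Eventually.of_forall fun y => K_nonneg d α ξ y)
    _ ≤ ∫ y : EuclideanSpace ℝ (Fin d), ‖ξ‖ ^ ((d : ℝ) + α) * auxG d α ‖(‖ξ‖ • y)‖ :=
        integral_mono (K_integrable d hd α hα hα2 ξ hξ) (dom_integrable d hd α hα hα2 ξ hξ)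
          (fun y => K_le d α ξ y hξ)
    _ = _ := by
      rw [integral_const_mul, Measure.integral_comp_smul volume
        (fun y : EuclideanSpace ℝ (Fin d) => auxG d α ‖y‖), finrank_euclideanSpace_fin,
        abs_of_pos (by positivity), Real.rpow_add hξ, Real.rpow_natCast, smul_eq_mul]
      field_simp

lemma K_lower (d : ℕ) (hd : 2 ≤ d) (α : ℝ) (hα : 0 < α) (hα2 : α < 2)
    (ξ : EuclideanSpace ℝ (Fin d)) (hξ : 1 ≤ ‖ξ‖) :
    (2 / Real.pi ^ 2 * (1 / 4) * (1 / 4) ^ d *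
      volume.real (Metric.ball (0 : EuclideanSpace ℝ (Fin d)) 1)) * ‖ξ‖ ^ α ≤
    ∫ y in Metric.ball (0 : EuclideanSpace ℝ (Fin d)) 1,
      (1 - Real.cos (inner ℝ ξ y)) * ‖y‖ ^ (-(d : ℝ) - α) := by
  have hξ0 : 0 < ‖ξ‖ := by linarith
  set r := ‖ξ‖ with hr
  set c : EuclideanSpace ℝ (Fin d) := (3 / 4 / r ^ 2) • ξ with hc
  have hcn : ‖c‖ = 3 / 4 / r := by
    rw [hc, norm_smul, Real.norm_of_nonneg (by positivity), ← hr]; field_simp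
  have hci : inner ℝ ξ c = 3 / 4 := by
    rw [hc, inner_smul_right, real_inner_self_eq_norm_sq, ← hr]; field_simp
  have hrad : (0 : ℝ) < 1 / 4 / r := by positivity
  have hB : ∀ y ∈ Metric.ball c (1 / 4 / r), ‖y‖ ≤ 1 / r ∧ ‖y‖ < 1 ∧ 1 / 2 ≤ inner ℝ ξ y
      ∧ inner ℝ ξ y ≤ 1 := by
    intro y hy
    rw [mem_ball_iff_norm] at hy
    have h1 : ‖y‖ < 1 / r := by
      have h2 : ‖y‖ ≤ ‖c‖ + ‖y - c‖ := by simpa using norm_add_le c (y - c)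
      have : (3 : ℝ) / 4 / r + 1 / 4 / r = 1 / r := by ring
      linarith
    have h2 : 1 / r ≤ 1 := by rw [div_le_one hξ0]; exact hξ
    have h3 : inner ℝ ξ y = 3 / 4 + inner ℝ ξ (y - c) := by rw [inner_sub_right, hci]; ring
    have h4 : |inner ℝ ξ (y - c)| ≤ 1 / 4 := by
      calc _ ≤ r * ‖y - c‖ := abs_real_inner_le_norm _ _
        _ ≤ r * (1 / 4 / r) := by gcongr
        _ = _ := by field_simp
    have h5 := abs_le.1 h4
    exact ⟨h1.le, by linarith, by linarith, by linarith⟩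
  have hK : ∀ y ∈ Metric.ball c (1 / 4 / r), 2 / Real.pi ^ 2 * (1 / 4) * r ^ ((d : ℝ) + α) ≤
      (1 - Real.cos (inner ℝ ξ y)) * ‖y‖ ^ (-(d : ℝ) - α) := by
    intro y hy
    obtain ⟨h1, -, h3, h4⟩ := hB y hy
    have hy0 : 0 < ‖y‖ := by
      rw [norm_pos_iff]
      rintro rfl
      rw [inner_zero_right] at h3
      norm_num at h3
    have hp := Real.pi_gt_three
    have h5 := Real.cos_le_one_sub_mul_cos_sq (x := inner ℝ ξ y) (by rw [abs_le]; constructor <;> linarith)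
    have h6 : r ^ ((d : ℝ) + α) ≤ ‖y‖ ^ (-(d : ℝ) - α) := by
      have : r ^ ((d : ℝ) + α) = (1 / r) ^ (-(d : ℝ) - α) := by
        rw [one_div, Real.inv_rpow hξ0.le, ← Real.rpow_neg hξ0.le]; congr 1; ring
      rw [this]
      exact Real.rpow_le_rpow_of_nonpos hy0 h1 (by have : (0:ℝ) ≤ d := Nat.cast_nonneg d; linarith)
    have h7 : 2 / Real.pi ^ 2 * (1 / 4) ≤ 2 / Real.pi ^ 2 * (inner ℝ ξ y) ^ 2 := by
      gcongr; nlinarith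
    have h8 : 0 < 2 / Real.pi ^ 2 * (1 / 4) := by positivity
    apply mul_le_mul (by linarith) h6 (by positivity) (by linarith)
  have hint := K_integrable d hd α hα hα2 ξ hξ0
  calc _ = volume.real (Metric.ball c (1 / 4 / r)) * (2 / Real.pi ^ 2 * (1 / 4) * r ^ ((d : ℝ) + α)) := by
        rw [Measure.real, Measure.real, Measure.addHaar_ball_of_pos _ _ hrad, ENNReal.toReal_mul,
          ENNReal.toReal_ofReal (by positivity), finrank_euclideanSpace_fin, Real.rpow_add hξ0,
          Real.rpow_natCast]
        simp only [div_pow, one_pow]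
        field_simp
    _ = ∫ y in Metric.ball c (1 / 4 / r), 2 / Real.pi ^ 2 * (1 / 4) * r ^ ((d : ℝ) + α) := by
        rw [setIntegral_const, smul_eq_mul]
    _ ≤ ∫ y in Metric.ball c (1 / 4 / r), (1 - Real.cos (inner ℝ ξ y)) * ‖y‖ ^ (-(d : ℝ) - α) :=
        setIntegral_mono_on (integrableOn_const measure_ball_lt_top.ne) hint.integrableOn
          measurableSet_ball hK
    _ ≤ _ := by
        refine setIntegral_mono_set hint.integrableOn
          (Filter.Eventually.of_forall fun y => K_nonneg d α ξ y) ?_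
        refine Filter.Eventually.of_forall fun y hy => ?_
        exact mem_ball_zero_iff.2 (hB y hy).2.1

/-- `1 + ψ(ξ)` is comparable to `1 + |ξ|^α` on all of `ℝ^d`, with
constants depending only on `d` and `α`. -/
theorem statement5 (d : ℕ) (hd : 2 ≤ d) (α : ℝ) (hα : 0 < α) (hα2 : α < 2) :
    ∃ c₁ c₂ : ℝ, 0 < c₁ ∧ 0 < c₂ ∧
      ∀ ξ : EuclideanSpace ℝ (Fin d),
        c₁ * (1 + ‖ξ‖ ^ α) ≤ 1 + truncPsi d α ξ ∧
        1 + truncPsi d α ξ ≤ c₂ * (1 + ‖ξ‖ ^ α) := by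
  have hA := stableA_pos d α hα hα2
  set M := ∫ y : EuclideanSpace ℝ (Fin d), auxG d α ‖y‖ with hM
  have hM0 : 0 ≤ M := integral_nonneg fun y => by
    show 0 ≤ auxG d α ‖y‖
    unfold auxG
    positivity
  set m := 2 / Real.pi ^ 2 * (1 / 4) * (1 / 4) ^ d *
      volume.real (Metric.ball (0 : EuclideanSpace ℝ (Fin d)) 1) with hm
  have hv : 0 < volume.real (Metric.ball (0 : EuclideanSpace ℝ (Fin d)) 1) :=
    ENNReal.toReal_pos (Metric.measure_ball_pos _ _ one_pos).ne' measure_ball_lt_top.ne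
  have hm0 : 0 < m := by have := Real.pi_pos; positivity
  have hpsi : ∀ ξ : EuclideanSpace ℝ (Fin d), 0 ≤ truncPsi d α ξ := fun ξ =>
    mul_nonneg hA.le (integral_nonneg fun y => K_nonneg d α ξ y)
  refine ⟨min (1 / 2) (stableA d α * m), 1 + stableA d α * M, by positivity, by positivity,
    fun ξ => ⟨?_, ?_⟩⟩
  · have hp := hpsi ξ
    have hx : 0 ≤ ‖ξ‖ ^ α := by positivity
    have hmin1 := min_le_left (1 / 2) (stableA d α * m)
    have hmin2 := min_le_right (1 / 2) (stableA d α * m)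
    rcases le_total ‖ξ‖ 1 with h | h
    · have h1 : ‖ξ‖ ^ α ≤ 1 := Real.rpow_le_one (norm_nonneg _) h hα.le
      nlinarith [mul_le_mul_of_nonneg_right hmin1 (by linarith : 0 ≤ 1 + ‖ξ‖ ^ α)]
    · have h1 := mul_le_mul_of_nonneg_left (K_lower d hd α hα hα2 ξ h) hA.le
      rw [← hm] at h1
      change _ ≤ truncPsi d α ξ at h1
      have h2 := mul_le_mul_of_nonneg_right hmin2 hx
      rw [mul_add]
      linarith
  · have hx : 0 ≤ ‖ξ‖ ^ α := by positivity
    rcases eq_or_ne ξ 0 with h | h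
    · have : truncPsi d α ξ = 0 := by simp [truncPsi, h]
      rw [this]
      nlinarith [mul_nonneg hA.le hM0, mul_nonneg (mul_nonneg hA.le hM0) hx]
    · have h1 := mul_le_mul_of_nonneg_left (K_upper d hd α hα hα2 ξ (norm_pos_iff.2 h)) hA.le
      rw [← hM] at h1
      change truncPsi d α ξ ≤ _ at h1
      nlinarith [mul_nonneg hA.le hM0, mul_nonneg (mul_nonneg hA.le hM0) hx]
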